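/- (Theorem 2, loss stability consequences.) Under the structure regularization framework, with each sample-wise loss L_τ(·, z′_j) convex and differentiable on F, ρ-admissible evaluation, τ-smooth point-wise cost, and feature values bounded by v, the minimizers f and f^{∖i′} satisfy, for every sample z = (x, y) of structure complexity n (with feature values bounded by v) and every position k: |ℓ_τ(f, z, k) − ℓ_τ(f^{∖i′}, z, k)| ≤ dτ²ρ²v²n² / (mλα²) (loss stability), and |L_τ(f, z) − L_τ(f^{∖i′}, z)| ≤ dτ²ρ²v²n³ / (mλα²) (sample loss stability). -/

import Mathlib

open scoped BigOperators

/-! Adding `lam / 2 * ‖g‖ ^ 2` to a convex risk makes it `lam`-strongly convex, so it grows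
quadratically away from its minimizer. Applying this growth to the full objective at `fminus`, to
the leave-one-out objective at `f`, and adding, everything cancels except the removed term:
`lam * ‖f - fminus‖ ^ 2` is at most the variation of one weighted mini-sample loss between `f` and
`fminus`. That variation is itself `O(‖f - fminus‖)`, so one factor cancels and `‖f - fminus‖` is
bounded. Mini-samples have complexity `n / α`, which is where the factor `α⁻²` comes from. -/

section Minimizers

open Set Filter Topology

variable {F : Type*} [NormedAddCommGroup F] {S : Set F} {Φ Ψ : F → ℝ} {f h : F}

theorem add_modulus_le_of_uniformConvexOn_of_isMinOn [NormedSpace ℝ F] {φ : ℝ → ℝ}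
    (hΦ : UniformConvexOn S φ Φ) (hf : f ∈ S) (hmin : IsMinOn Φ S f) (hh : h ∈ S) :
    Φ f + φ ‖f - h‖ ≤ Φ h := by
  have chord : ∀ t ∈ Ioo (0 : ℝ) 1, (1 - t) * φ ‖f - h‖ ≤ Φ h - Φ f := by
    rintro t ⟨ht0, ht1⟩
    have hsum : 1 - t + t = 1 := sub_add_cancel 1 t
    have hle : Φ f ≤ Φ ((1 - t) • f + t • h) :=
      hmin (hΦ.1 hf hh (sub_nonneg.2 ht1.le) ht0.le hsum)
    have hconv := hΦ.2 hf hh (sub_nonneg.2 ht1.le) ht0.le hsum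
    rw [smul_eq_mul, smul_eq_mul] at hconv
    refine le_of_mul_le_mul_left ?_ ht0
    linarith
  have hlim : Tendsto (fun t : ℝ => (1 - t) * φ ‖f - h‖) (𝓝[>] 0) (𝓝 (φ ‖f - h‖)) := by
    have hcont : Continuous fun t : ℝ => (1 - t) * φ ‖f - h‖ := by fun_prop
    simpa only [sub_zero, one_mul] using (hcont.tendsto 0).mono_left nhdsWithin_le_nhds
  have hgap : φ ‖f - h‖ ≤ Φ h - Φ f :=
    le_of_tendsto hlim (mem_of_superset (Ioo_mem_nhdsGT one_pos) chord)
  linarith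

theorem mul_sq_norm_sub_le_of_strongConvexOn_of_isMinOn [NormedSpace ℝ F] {μ : ℝ}
    (hΦ : StrongConvexOn S μ Φ) (hΨ : StrongConvexOn S μ Ψ) (hf : f ∈ S) (hh : h ∈ S)
    (hfmin : IsMinOn Φ S f) (hhmin : IsMinOn Ψ S h) :
    μ * ‖f - h‖ ^ 2 ≤ (Φ h - Ψ h) - (Φ f - Ψ f) := by
  have hΦgrowth := add_modulus_le_of_uniformConvexOn_of_isMinOn hΦ hf hfmin hh
  have hΨgrowth := add_modulus_le_of_uniformConvexOn_of_isMinOn hΨ hh hhmin hf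
  rw [norm_sub_rev h f] at hΨgrowth
  linarith

end Minimizers

theorem convexOn_finset_sum {𝕜 E β ι : Type*} [Semiring 𝕜] [PartialOrder 𝕜] [AddCommMonoid E]
    [AddCommMonoid β] [PartialOrder β] [IsOrderedAddMonoid β] [SMul 𝕜 E] [Module 𝕜 β]
    {S : Set E} (hS : Convex 𝕜 S) {s : Finset ι} {L : ι → E → β}
    (hL : ∀ p ∈ s, ConvexOn 𝕜 S (L p)) : ConvexOn 𝕜 S (fun g => ∑ p ∈ s, L p g) := by
  rw [← Finset.sum_fn]
  exact Finset.sum_induction L (ConvexOn 𝕜 S) (fun _ _ => ConvexOn.add) (convexOn_const 0 hS) hL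

section RegularizedRisk

variable {F ι : Type*} {w lam : ℝ} {s : Finset ι} {L : ι → F → ℝ}

/-- The risk of `g` on the (mini-)samples indexed by `s`, with weight `w` on each loss and weight
regularization of strength `lam`. Removing a sample shrinks `s` and leaves `w` unchanged. -/
noncomputable def regularizedRisk [Norm F] (w lam : ℝ) (s : Finset ι) (L : ι → F → ℝ)
    (g : F) : ℝ :=
  w * ∑ p ∈ s, L p g + lam / 2 * ‖g‖ ^ 2

theorem regularizedRisk_sub_erase [Norm F] [DecidableEq ι] {i : ι} (hi : i ∈ s) (g : F) :
    regularizedRisk w lam s L g - regularizedRisk w lam (s.erase i) L g = w * L i g := by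
  rw [regularizedRisk, regularizedRisk, ← Finset.add_sum_erase s _ hi]
  ring

variable [NormedAddCommGroup F] [InnerProductSpace ℝ F] {S : Set F}

theorem strongConvexOn_regularizedRisk (hS : Convex ℝ S) (hw : 0 ≤ w)
    (hL : ∀ p ∈ s, ConvexOn ℝ S (L p)) : StrongConvexOn S lam (regularizedRisk w lam s L) := by
  rw [strongConvexOn_iff_convex]
  simpa only [regularizedRisk, add_sub_cancel_right, smul_eq_mul] using!
    (convexOn_finset_sum hS hL).smul hw

theorem mul_norm_sub_le_of_isMinOn_erase [DecidableEq ι] {i : ι} {f h : F} {K : ℝ}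
    (hw : 0 ≤ w) (hL : ∀ p ∈ s, ConvexOn ℝ S (L p)) (hi : i ∈ s)
    (hf : f ∈ S) (hh : h ∈ S) (hfmin : IsMinOn (regularizedRisk w lam s L) S f)
    (hhmin : IsMinOn (regularizedRisk w lam (s.erase i) L) S h)
    (hK : 0 ≤ K) (hLip : L i h - L i f ≤ K * ‖f - h‖) :
    lam * ‖f - h‖ ≤ w * K := by
  have hsq : lam * ‖f - h‖ ^ 2 ≤ w * L i h - w * L i f := by
    simpa only [regularizedRisk_sub_erase hi] using
      mul_sq_norm_sub_le_of_strongConvexOn_of_isMinOn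
        (strongConvexOn_regularizedRisk (hL i hi).1 hw hL)
        (strongConvexOn_regularizedRisk (hL i hi).1 hw
          fun p hp => hL p (Finset.mem_of_mem_erase hp))
        hf hh hfmin hhmin
  have hvar : w * L i h - w * L i f ≤ w * (K * ‖f - h‖) := by
    rw [← mul_sub]
    exact mul_le_mul_of_nonneg_left hLip hw
  rcases (norm_nonneg (f - h)).eq_or_lt with hzero | hpos
  · rw [← hzero, mul_zero]
    exact mul_nonneg hw hK
  · refine le_of_mul_le_mul_right ?_ hpos
    linarith

end RegularizedRisk

section Features

variable {𝕜 κ δ : Type*} [RCLike 𝕜] [Fintype κ] [Fintype δ] {v : ℝ}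

theorem euclideanSpace_norm_le_sqrt_card_mul {x : EuclideanSpace 𝕜 δ} (hx : ∀ q, ‖x q‖ ≤ v) :
    ‖x‖ ≤ √(Fintype.card δ) * v := by
  rcases isEmpty_or_nonempty δ with _ | ⟨⟨q₀⟩⟩
  · simp [EuclideanSpace.norm_eq]
  · have hv : 0 ≤ v := (norm_nonneg _).trans (hx q₀)
    calc ‖x‖ = √(∑ q, ‖x q‖ ^ 2) := EuclideanSpace.norm_eq x
      _ ≤ √(∑ _q : δ, v ^ 2) := by gcongr with q; exact hx q
      _ = √(Fintype.card δ) * v := by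
        rw [Finset.sum_const, Finset.card_univ, nsmul_eq_mul, Real.sqrt_mul (Nat.cast_nonneg _),
          Real.sqrt_sq hv]

theorem norm_sum_le_card_mul_sqrt_card_mul {x : κ → EuclideanSpace 𝕜 δ}
    (hx : ∀ k q, ‖x k q‖ ≤ v) : ‖∑ k, x k‖ ≤ Fintype.card κ * (√(Fintype.card δ) * v) := by
  simpa only [Finset.sum_const, Finset.card_univ, nsmul_eq_mul] using
    norm_sum_le_of_le Finset.univ fun k _ => euclideanSpace_norm_le_sqrt_card_mul (hx k)

end Features

section Losses

variable {κ δ : Type*} [Fintype κ] {c : ℝ → ℝ → ℝ}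

/-- The sample-wise loss: the point-wise cost `c` summed over the positions of a sample, as a
function of the predictions `a` and the tags `y`. -/
def sampleLoss (c : ℝ → ℝ → ℝ) (a y : κ → ℝ) : ℝ := ∑ k, c (a k) (y k)

theorem abs_sampleLoss_sub_le {a b y : κ → ℝ} {C : ℝ}
    (hC : ∀ k, |c (a k) (y k) - c (b k) (y k)| ≤ C) :
    |sampleLoss c a y - sampleLoss c b y| ≤ Fintype.card κ * C := by
  rw [sampleLoss, sampleLoss, ← Finset.sum_sub_distrib]
  simpa only [Finset.sum_const, Finset.card_univ, nsmul_eq_mul, Real.norm_eq_abs] using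
    norm_sum_le_of_le Finset.univ fun k _ => (Real.norm_eq_abs _).trans_le (hC k)

theorem nonneg_of_abs_sub_le_mul_abs_sub {φ : ℝ → ℝ} {τ : ℝ}
    (hφ : ∀ y₁ y₂, |φ y₁ - φ y₂| ≤ τ * |y₁ - y₂|) : 0 ≤ τ := by
  simpa using (abs_nonneg _).trans (hφ 1 0)

theorem abs_cost_sub_le [Fintype δ] {τ ρ v r a b y : ℝ} {x : κ → EuclideanSpace ℝ δ}
    (hc : ∀ y₁ y₂ y, |c y₁ y - c y₂ y| ≤ τ * |y₁ - y₂|) (hρ : 0 ≤ ρ) (hr : 0 ≤ r)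
    (hx : ∀ k q, |x k q| ≤ v) (hab : |a - b| ≤ ρ * r * ‖∑ k, x k‖) :
    |c a y - c b y| ≤ τ * ρ * (Fintype.card κ * (√(Fintype.card δ) * v)) * r := by
  have hτ : 0 ≤ τ := nonneg_of_abs_sub_le_mul_abs_sub fun y₁ y₂ => hc y₁ y₂ 0
  calc |c a y - c b y| ≤ τ * |a - b| := hc a b y
    _ ≤ τ * (ρ * r * (Fintype.card κ * (√(Fintype.card δ) * v))) := by
      gcongr
      exact hab.trans (by gcongr; exact norm_sum_le_card_mul_sqrt_card_mul hx)
    _ = τ * ρ * (Fintype.card κ * (√(Fintype.card δ) * v)) * r := by ring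

end Losses

theorem mul_norm_sub_le_of_isMinOn_erase_sampleLoss {F ι κ δ : Type*} [NormedAddCommGroup F]
    [InnerProductSpace ℝ F] [DecidableEq ι] [Fintype κ] [Fintype δ] {S : Set F} {s : Finset ι}
    {w lam τ ρ v : ℝ} {c : ℝ → ℝ → ℝ} {pred : ι → F → κ → ℝ} {y : ι → κ → ℝ} {i : ι}
    {x : κ → EuclideanSpace ℝ δ} {f h : F} (hw : 0 ≤ w) (hρ : 0 ≤ ρ)
    (hc : ∀ y₁ y₂ y, |c y₁ y - c y₂ y| ≤ τ * |y₁ - y₂|) (hx : ∀ k q, |x k q| ≤ v)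
    (hadm : ∀ k, |pred i f k - pred i h k| ≤ ρ * ‖f - h‖ * ‖∑ k', x k'‖)
    (hconv : ∀ p ∈ s, ConvexOn ℝ S fun g => sampleLoss c (pred p g) (y p)) (hi : i ∈ s)
    (hfS : f ∈ S) (hhS : h ∈ S)
    (hf : IsMinOn (regularizedRisk w lam s fun p g => sampleLoss c (pred p g) (y p)) S f)
    (hh : IsMinOn (regularizedRisk w lam (s.erase i) fun p g => sampleLoss c (pred p g) (y p))
      S h) :
    lam * ‖f - h‖ ≤
      w * (Fintype.card κ * (τ * ρ * (Fintype.card κ * (√(Fintype.card δ) * v)))) := by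
  have hτ : 0 ≤ τ := nonneg_of_abs_sub_le_mul_abs_sub fun y₁ y₂ => hc y₁ y₂ 0
  have hX : 0 ≤ Fintype.card κ * (√(Fintype.card δ) * v) :=
    (norm_nonneg (∑ k, x k)).trans (norm_sum_le_card_mul_sqrt_card_mul hx)
  have hloss := abs_sampleLoss_sub_le (y := y i)
    fun k => abs_cost_sub_le hc hρ (norm_nonneg (f - h)) hx (hadm k)
  refine mul_norm_sub_le_of_isMinOn_erase hw hconv hi hfS hhS hf hh (by positivity) ?_
  rw [abs_sub_comm, ← mul_assoc] at hloss
  exact (le_abs_self _).trans hloss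

theorem loss_stability_structure_regularization_general
    {F : Type*} [NormedAddCommGroup F] [InnerProductSpace ℝ F]
    (d m α n n' : ℕ) (hn : 0 < n) (hdiv : n = α * n')
    (eval : F → (t : ℕ) → (Fin t → EuclideanSpace ℝ (Fin d)) → Fin t → ℝ)
    (ρ : ℝ) (hρ : 0 ≤ ρ)
    (hadm : ∀ (g g' : F) (t : ℕ) (x : Fin t → EuclideanSpace ℝ (Fin d)) (k : Fin t),
      |eval g t x k - eval g' t x k| ≤ ρ * ‖g - g'‖ * ‖∑ k', x k'‖)
    (cτ : ℝ → ℝ → ℝ) (τ : ℝ)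
    (hsmooth : ∀ y₁ y₂ ystar : ℝ, |cτ y₁ ystar - cτ y₂ ystar| ≤ τ * |y₁ - y₂|)
    (v : ℝ)
    (x' : Fin m × Fin α → Fin n' → EuclideanSpace ℝ (Fin d))
    (y' : Fin m × Fin α → Fin n' → ℝ)
    (hconv : ∀ p, ConvexOn ℝ Set.univ fun g => sampleLoss cτ (eval g n' (x' p)) (y' p))
    (lam : ℝ) (hlam : 0 < lam) (i' : Fin m × Fin α) (hval : ∀ k q, |x' i' k q| ≤ v)
    (f fminus : F)
    (hf : IsMinOn (regularizedRisk (1 / ((m : ℝ) * n)) lam Finset.univ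
      fun p g => sampleLoss cτ (eval g n' (x' p)) (y' p)) Set.univ f)
    (hfminus : IsMinOn (regularizedRisk (1 / ((m : ℝ) * n)) lam (Finset.univ.erase i')
      fun p g => sampleLoss cτ (eval g n' (x' p)) (y' p)) Set.univ fminus)
    (t : ℕ) (x : Fin t → EuclideanSpace ℝ (Fin d)) (y : Fin t → ℝ)
    (hx : ∀ k q, |x k q| ≤ v) :
    (∀ k, |cτ (eval f t x k) (y k) - cτ (eval fminus t x k) (y k)|
        ≤ d * τ ^ 2 * ρ ^ 2 * v ^ 2 * (n * t) / (m * lam * α ^ 2))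
      ∧ |sampleLoss cτ (eval f t x) y - sampleLoss cτ (eval fminus t x) y|
        ≤ d * τ ^ 2 * ρ ^ 2 * v ^ 2 * (n * t ^ 2) / (m * lam * α ^ 2) := by
  have hstab := mul_norm_sub_le_of_isMinOn_erase_sampleLoss (by positivity) hρ hsmooth hval
    (hadm f fminus n' (x' i')) (fun p _ => hconv p) (Finset.mem_univ i')
    (Set.mem_univ f) (Set.mem_univ fminus) hf hfminus
  have hτ : 0 ≤ τ := nonneg_of_abs_sub_le_mul_abs_sub fun y₁ y₂ => hsmooth y₁ y₂ 0
  have hX := (norm_nonneg (∑ k, x k)).trans (norm_sum_le_card_mul_sqrt_card_mul hx)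
  simp only [Fintype.card_fin] at hstab hX
  have hpoint : ∀ k, |cτ (eval f t x k) (y k) - cτ (eval fminus t x k) (y k)|
      ≤ d * τ ^ 2 * ρ ^ 2 * v ^ 2 * (n * t) / (m * lam * α ^ 2) := fun k =>
    calc |cτ (eval f t x k) (y k) - cτ (eval fminus t x k) (y k)|
        ≤ τ * ρ * (t * (√d * v)) * ‖f - fminus‖ := by
          simpa only [Fintype.card_fin] using
            abs_cost_sub_le hsmooth hρ (norm_nonneg _) hx (hadm f fminus t x k)
      _ ≤ τ * ρ * (t * (√d * v)) * (1 / (m * n) * (n' * (τ * ρ * (n' * (√d * v)))) / lam) := by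
          gcongr
          exact (le_div_iff₀' hlam).2 hstab
      _ = d * τ ^ 2 * ρ ^ 2 * v ^ 2 * (n * t) / (m * lam * α ^ 2) := by
          have hn' : (n' : ℝ) ≠ 0 := Nat.cast_ne_zero.2 (by rintro rfl; omega)
          have hα : (α : ℝ) ≠ 0 := Nat.cast_ne_zero.2 i'.2.pos.ne'
          have hnα : (n : ℝ) = α * n' := by rw [hdiv, Nat.cast_mul]
          rw [hnα]
          field_simp
          rw [Real.sq_sqrt (Nat.cast_nonneg d)]
          ring
  refine ⟨hpoint, (abs_sampleLoss_sub_le hpoint).trans_eq ?_⟩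
  rw [Fintype.card_fin]
  ring

/-- **Theorem 2 (loss stability consequences).**
Under the structure regularization framework, the minimizers `f` and `fminus`
(with the single mini-sample term `i'` removed) satisfy, for every sample
`z = (x, y)` of structure complexity `n` with feature values bounded by `v`
and every position `k`:
`|ℓτ(f,z,k) - ℓτ(fminus,z,k)| ≤ d * τ² * ρ² * v² * n² / (m * lam * α²)`
(loss stability) and
`|Lτ(f,z) - Lτ(fminus,z)| ≤ d * τ² * ρ² * v² * n³ / (m * lam * α²)`
(sample loss stability). -/
theorem loss_stability_structure_regularization
    {F : Type*} [NormedAddCommGroup F] [InnerProductSpace ℝ F]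
    (d m α n n' : ℕ) (hm : 0 < m) (hα : 0 < α) (hn : 0 < n)
    (hdiv : n = α * n')
    (eval : F → (t : ℕ) → (Fin t → EuclideanSpace ℝ (Fin d)) → Fin t → ℝ)
    (ρ : ℝ) (hρ : 0 ≤ ρ)
    (hadm : ∀ (g g' : F) (t : ℕ) (x : Fin t → EuclideanSpace ℝ (Fin d)) (k : Fin t),
      |eval g t x k - eval g' t x k| ≤ ρ * ‖g - g'‖ * ‖∑ k', x k'‖)
    (cτ : ℝ → ℝ → ℝ) (τ : ℝ)
    (hsmooth : ∀ y₁ y₂ ystar : ℝ, |cτ y₁ ystar - cτ y₂ ystar| ≤ τ * |y₁ - y₂|)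
    (hcost_convex : ∀ ystar : ℝ, ConvexOn ℝ Set.univ (fun y : ℝ => cτ y ystar))
    (v : ℝ)
    (x' : Fin m × Fin α → Fin n' → EuclideanSpace ℝ (Fin d))
    (y' : Fin m × Fin α → Fin n' → ℝ)
    (hval : ∀ (p : Fin m × Fin α) (k : Fin n') (q : Fin d), |x' p k q| ≤ v)
    (hconv : ∀ p : Fin m × Fin α,
      ConvexOn ℝ Set.univ (fun g : F => ∑ k, cτ (eval g n' (x' p) k) (y' p k)))
    (hdiff : ∀ p : Fin m × Fin α,
      Differentiable ℝ (fun g : F => ∑ k, cτ (eval g n' (x' p) k) (y' p k)))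
    (lam : ℝ) (hlam : 0 < lam)
    (f : F)
    (hf : ∀ g : F,
      1 / ((m : ℝ) * n) * ∑ p : Fin m × Fin α, ∑ k, cτ (eval f n' (x' p) k) (y' p k)
          + lam / 2 * ‖f‖ ^ 2
        ≤ 1 / ((m : ℝ) * n) * ∑ p : Fin m × Fin α, ∑ k, cτ (eval g n' (x' p) k) (y' p k)
          + lam / 2 * ‖g‖ ^ 2)
    (i' : Fin m × Fin α) (fminus : F)
    (hfminus : ∀ g : F,
      1 / ((m : ℝ) * n) * ∑ p ∈ Finset.univ.erase i', ∑ k, cτ (eval fminus n' (x' p) k) (y' p k)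
          + lam / 2 * ‖fminus‖ ^ 2
        ≤ 1 / ((m : ℝ) * n) * ∑ p ∈ Finset.univ.erase i', ∑ k, cτ (eval g n' (x' p) k) (y' p k)
          + lam / 2 * ‖g‖ ^ 2) :
    ∀ (x : Fin n → EuclideanSpace ℝ (Fin d)) (y : Fin n → ℝ),
      (∀ (k : Fin n) (q : Fin d), |x k q| ≤ v) →
      (∀ k : Fin n,
        |cτ (eval f n x k) (y k) - cτ (eval fminus n x k) (y k)|
          ≤ (d : ℝ) * τ ^ 2 * ρ ^ 2 * v ^ 2 * (n : ℝ) ^ 2 / ((m : ℝ) * lam * (α : ℝ) ^ 2))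
      ∧ |(∑ k, cτ (eval f n x k) (y k)) - ∑ k, cτ (eval fminus n x k) (y k)|
          ≤ (d : ℝ) * τ ^ 2 * ρ ^ 2 * v ^ 2 * (n : ℝ) ^ 3 / ((m : ℝ) * lam * (α : ℝ) ^ 2) := by
  intro x y hx
  simpa only [← sq, ← pow_succ'] using!
    loss_stability_structure_regularization_general d m α n n' hn hdiv eval ρ hρ hadm cτ τ hsmooth
      v x' y' hconv lam hlam i' (hval i') f fminus (fun g _ => hf g) (fun g _ => hfminus g) n x y hx
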